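/- arXiv:2006.13132 — 4 statements merged into one kernel-verified Lean document; each statement's English description precedes it below -/
import Mathlib

section
/- Let X be a metric space with its Borel σ-algebra, μ a probability measure on X, and f, g : X → ℝ measurable and integrable functions. Let α > 0 and 0 < γ ≤ 1. Assume (i) min(f(x), g(x)) ≤ 0 for μ-almost every x (μ is supported on the region H_f^- ∪ H_g^- of negatively predicted individuals), and (ii) for all x, dist(x, {y : f(y) > 0} ∩ {y : g(y) > 0}) ≤ α · (max(0, max(−f(x), −g(x))))^γ. Then ∫ dist(x, {f > 0} ∩ {g > 0}) dμ(x) ≤ (α / 2^γ) · ( ∫ (−f(x) − g(x) + |f(x) − g(x)|) dμ(x) )^γ. -/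
open MeasureTheory Metric

/-!
Where `min f g ≤ 0`, the residual `max 0 (max (-f) (-g))` is `max (-f) (-g)`, which is half of
`-f - g + |f - g|`. Integrating the residual bound and applying Jensen's inequality to the concave
function `t ↦ t ^ γ` moves the exponent outside the integral; for a measure of total mass `M`,
Jensen's inequality for the normalized measure costs a factor `M ^ (1 - γ)`.
-/

lemma two_mul_max_neg_neg {R : Type*} [Ring R] [LinearOrder R] [IsOrderedAddMonoid R] (a b : R) :
    2 * max (-a) (-b) = -a - b + |a - b| := by
  simpa only [two_nsmul, ← two_mul, neg_sub_neg, ← sub_eq_add_neg] using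
    two_nsmul_sup_eq_add_add_abs_sub (-a) (-b)

section Integral

variable {Ω : Type*} [MeasurableSpace Ω] {μ : Measure Ω}

lemma integral_neg_sub_add_abs_sub_eq_two_mul {f g : Ω → ℝ}
    (hneg : ∀ᵐ x ∂μ, min (f x) (g x) ≤ 0) :
    ∫ x, (-f x - g x + |f x - g x|) ∂μ = 2 * ∫ x, max 0 (max (-f x) (-g x)) ∂μ := by
  rw [← integral_const_mul]
  refine integral_congr_ae ?_
  filter_upwards [hneg] with x hx
  have hmax : 0 ≤ max (-f x) (-g x) := by rwa [max_neg_neg, neg_nonneg]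
  rw [max_eq_right hmax, two_mul_max_neg_neg]

variable [IsFiniteMeasure μ] {u : Ω → ℝ} {γ : ℝ}

lemma integrable_rpow_of_le_one (hu : Integrable u μ) (hu₀ : 0 ≤ᵐ[μ] u)
    (hγ₀ : 0 ≤ γ) (hγ₁ : γ ≤ 1) : Integrable (fun x ↦ u x ^ γ) μ := by
  have hmem : MemLp u (ENNReal.ofReal γ) μ :=
    (memLp_one_iff_integrable.2 hu).mono_exponent (ENNReal.ofReal_le_one.2 hγ₁)
  refine hmem.integrable_norm_rpow'.congr ?_
  filter_upwards [hu₀] with x hx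
  rw [Real.norm_of_nonneg hx, ENNReal.toReal_ofReal hγ₀]

lemma integral_rpow_le_measureReal_rpow_mul (hu : Integrable u μ) (hu₀ : 0 ≤ᵐ[μ] u)
    (hγ₀ : 0 ≤ γ) (hγ₁ : γ ≤ 1) :
    ∫ x, u x ^ γ ∂μ ≤ μ.real Set.univ ^ (1 - γ) * (∫ x, u x ∂μ) ^ γ := by
  rcases eq_zero_or_neZero μ with rfl | _
  · simp only [integral_zero_measure]
    positivity
  have hM : 0 < μ.real Set.univ := measureReal_univ_pos
  have jensen : ⨍ x, u x ^ γ ∂μ ≤ (⨍ x, u x ∂μ) ^ γ :=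
    (Real.concaveOn_rpow hγ₀ hγ₁).le_map_average (Real.continuous_rpow_const hγ₀).continuousOn
      isClosed_Ici hu₀ hu (integrable_rpow_of_le_one hu hu₀ hγ₀ hγ₁)
  calc ∫ x, u x ^ γ ∂μ = μ.real Set.univ * ⨍ x, u x ^ γ ∂μ :=
        (measure_smul_average μ _).symm
    _ ≤ μ.real Set.univ * (⨍ x, u x ∂μ) ^ γ := by gcongr
    _ = μ.real Set.univ * ((∫ x, u x ∂μ) ^ γ / μ.real Set.univ ^ γ) := by
        rw [average_eq, smul_eq_mul, inv_mul_eq_div,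
          Real.div_rpow (integral_nonneg_of_ae hu₀) hM.le]
    _ = μ.real Set.univ ^ (1 - γ) * (∫ x, u x ∂μ) ^ γ := by
        rw [Real.rpow_sub hM, Real.rpow_one]
        ring

end Integral

section ResidualBound

variable {X : Type*} [PseudoMetricSpace X] [MeasurableSpace X] [OpensMeasurableSpace X]
  {μ : Measure X} [IsFiniteMeasure μ] {S : Set X} {α γ : ℝ}

lemma integral_infDist_le_of_ae_le_mul_rpow {u : X → ℝ} (hu : Integrable u μ)
    (hu₀ : 0 ≤ᵐ[μ] u) (hα : 0 ≤ α) (hγ₀ : 0 ≤ γ) (hγ₁ : γ ≤ 1)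
    (hdist : ∀ᵐ x ∂μ, infDist x S ≤ α * u x ^ γ) :
    ∫ x, infDist x S ∂μ ≤ α * (μ.real Set.univ ^ (1 - γ) * (∫ x, u x ∂μ) ^ γ) := by
  have hbound : Integrable (fun x ↦ α * u x ^ γ) μ :=
    (integrable_rpow_of_le_one hu hu₀ hγ₀ hγ₁).const_mul α
  have hcost : Integrable (fun x ↦ infDist x S) μ := by
    refine hbound.mono' measurable_infDist.aestronglyMeasurable ?_
    simpa only [Real.norm_of_nonneg infDist_nonneg] using hdist
  calc ∫ x, infDist x S ∂μ ≤ ∫ x, α * u x ^ γ ∂μ := integral_mono_ae hcost hbound hdist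
    _ = α * ∫ x, u x ^ γ ∂μ := integral_const_mul _ _
    _ ≤ α * (μ.real Set.univ ^ (1 - γ) * (∫ x, u x ∂μ) ^ γ) := by
        gcongr
        exact integral_rpow_le_measureReal_rpow_mul hu hu₀ hγ₀ hγ₁

theorem integral_infDist_le_of_residual_bound_general {f g : X → ℝ}
    (hf : Integrable f μ) (hg : Integrable g μ) (hα : 0 ≤ α) (hγ₀ : 0 ≤ γ) (hγ₁ : γ ≤ 1)
    (hneg : ∀ᵐ x ∂μ, min (f x) (g x) ≤ 0)
    (hdist : ∀ᵐ x ∂μ, infDist x S ≤ α * (max 0 (max (-f x) (-g x))) ^ γ) :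
    ∫ x, infDist x S ∂μ ≤
      (α / 2 ^ γ) * μ.real Set.univ ^ (1 - γ) *
        (∫ x, (-f x - g x + |f x - g x|) ∂μ) ^ γ := by
  have hres₀ (x : X) : 0 ≤ max 0 (max (-f x) (-g x)) := le_max_left _ _
  have hres : Integrable (fun x ↦ max 0 (max (-f x) (-g x))) μ :=
    (integrable_zero X ℝ μ).sup (hf.neg.sup hg.neg)
  refine (integral_infDist_le_of_ae_le_mul_rpow hres (.of_forall hres₀)
    hα hγ₀ hγ₁ hdist).trans_eq ?_
  rw [integral_neg_sub_add_abs_sub_eq_two_mul hneg,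
    Real.mul_rpow two_pos.le (integral_nonneg hres₀)]
  field_simp

end ResidualBound

/-- Key integrated bound in the proof of Proposition 2: under the Pang-type residual bound
(Assumption 1) and assuming `μ` is supported on `H_f^- ∪ H_g^-` (i.e. `min (f x) (g x) ≤ 0`
a.e.), the expected cost of flipping both classifiers satisfies
`∫ dist(x, {f > 0} ∩ {g > 0}) dμ ≤ (α / 2^γ) * (∫ (-f - g + |f - g|) dμ)^γ`. -/
theorem integral_infDist_le_of_residual_bound {X : Type*} [MetricSpace X] [MeasurableSpace X]
    [BorelSpace X] (μ : Measure X) [IsProbabilityMeasure μ]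
    (f g : X → ℝ) (hf : Measurable f) (hg : Measurable g)
    (hfi : Integrable f μ) (hgi : Integrable g μ)
    (α γ : ℝ) (hα : 0 < α) (hγ0 : 0 < γ) (hγ1 : γ ≤ 1)
    (hneg : ∀ᵐ x ∂μ, min (f x) (g x) ≤ 0)
    (hdist : ∀ x, infDist x ({y | 0 < f y} ∩ {y | 0 < g y}) ≤
      α * (max 0 (max (-f x) (-g x))) ^ γ) :
    ∫ x, infDist x ({y | 0 < f y} ∩ {y | 0 < g y}) ∂μ ≤
      (α / 2 ^ γ) * (∫ x, (-f x - g x + |f x - g x|) ∂μ) ^ γ := by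
  simpa only [probReal_univ, Real.one_rpow, mul_one] using
    integral_infDist_le_of_residual_bound_general hfi hgi hα.le hγ0.le hγ1 hneg (.of_forall hdist)
end

section
/- Let μ be a probability measure on a measurable space X, D⁺ ⊆ X a measurable set (the individuals whose true label is +1, with complement D⁻), and f : X → ℝ a measurable function with |f(x)| ≤ M for all x, where M ≥ 0. Then −∫ f dμ ≤ 2M · ( μ(D⁺ ∩ {x : f(x) ≤ 0}) + μ(D⁻ ∩ {x : f(x) > 0}) ) + ∫_{D⁺} f dμ − ∫_{D⁻} f dμ. -/
/-!
Since `∫ f = ∫_{D⁺} f + ∫_{D⁻} f`, the integrals over `D⁻` cancel and the inequality reduces to a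
lower bound for `∫_{D⁺} f`. There the positive part of `f` only helps, and on the false negatives
`D⁺ ∩ {f ≤ 0}` one has `f ≥ -M`. The false positives `D⁻ ∩ {f > 0}` contribute only slack.
-/

open MeasureTheory

section

variable {X : Type*} [MeasurableSpace X] {μ : Measure X} {f : X → ℝ}

theorem setIntegral_nonpos_le_integral (hf : Integrable f μ) :
    ∫ x in {x | f x ≤ 0}, f x ∂μ ≤ ∫ x, f x ∂μ := by
  have hS : NullMeasurableSet {x | f x ≤ 0} μ :=
    hf.aestronglyMeasurable.nullMeasurableSet_le aestronglyMeasurable_const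
  have hcompl : 0 ≤ ∫ x in {x | f x ≤ 0}ᶜ, f x ∂μ :=
    setIntegral_nonneg_of_ae_restrict <| (ae_restrict_mem₀ hS.compl).mono fun _ hx ↦
      le_of_not_ge hx
  rw [← integral_add_compl₀ hS hf]
  exact le_add_of_nonneg_right hcompl

theorem mul_measureReal_nonpos_le_integral (hf : Integrable f μ) (hfin : μ {x | f x ≤ 0} ≠ ⊤)
    {c : ℝ} (hc : ∀ᵐ x ∂μ, c ≤ f x) :
    c * μ.real {x | f x ≤ 0} ≤ ∫ x, f x ∂μ :=
  calc c * μ.real {x | f x ≤ 0}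
    _ = ∫ _ in {x | f x ≤ 0}, c ∂μ := by rw [setIntegral_const, smul_eq_mul, mul_comm]
    _ ≤ ∫ x in {x | f x ≤ 0}, f x ∂μ :=
      setIntegral_mono_ae (integrableOn_const hfin) hf.integrableOn hc
    _ ≤ ∫ x, f x ∂μ := setIntegral_nonpos_le_integral hf

theorem mul_measureReal_inter_nonpos_le_setIntegral {s : Set X} (hf : IntegrableOn f s μ)
    (hfin : μ (s ∩ {x | f x ≤ 0}) ≠ ⊤) {c : ℝ} (hc : ∀ᵐ x ∂μ.restrict s, c ≤ f x) :
    c * μ.real (s ∩ {x | f x ≤ 0}) ≤ ∫ x in s, f x ∂μ := by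
  have hS : NullMeasurableSet {x | f x ≤ 0} (μ.restrict s) :=
    hf.aestronglyMeasurable.nullMeasurableSet_le aestronglyMeasurable_const
  rw [Set.inter_comm] at hfin ⊢
  rw [← measureReal_restrict_apply₀ hS]
  exact mul_measureReal_nonpos_le_integral hf (by rwa [Measure.restrict_apply₀ hS]) hc

theorem neg_integral_le_risk_bound_general {D : Set X} (hD : NullMeasurableSet D μ)
    (hf : Integrable f μ) (hfin : μ (D ∩ {x | f x ≤ 0}) ≠ ⊤) {M : ℝ}
    (hM : ∀ᵐ x ∂μ.restrict D, -M ≤ f x) :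
    -∫ x, f x ∂μ ≤
      2 * M * μ.real (D ∩ {x | f x ≤ 0}) + ∫ x in D, f x ∂μ - ∫ x in Dᶜ, f x ∂μ := by
  have hsplit : ∫ x in D, f x ∂μ + ∫ x in Dᶜ, f x ∂μ = ∫ x, f x ∂μ := integral_add_compl₀ hD hf
  have hlower : -M * μ.real (D ∩ {x | f x ≤ 0}) ≤ ∫ x in D, f x ∂μ :=
    mul_measureReal_inter_nonpos_le_setIntegral hf.integrableOn hfin hM
  linarith

end

/-- The rewriting inequality (equations (note1)–(note2) in the proof of Proposition 2): for a
probability measure `μ`, a measurable set `D⁺`, and a measurable `f` with `|f| ≤ M`,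
`-∫ f dμ ≤ 2M·(μ(D⁺ ∩ {f ≤ 0}) + μ(D⁻ ∩ {f > 0})) + ∫_{D⁺} f dμ - ∫_{D⁻} f dμ`. -/
theorem neg_integral_le_risk_bound {X : Type*} [MeasurableSpace X] (μ : Measure X)
    [IsProbabilityMeasure μ] (Dp : Set X) (hDp : MeasurableSet Dp)
    (f : X → ℝ) (hf : Measurable f) (M : ℝ) (hM : 0 ≤ M) (hbound : ∀ x, |f x| ≤ M) :
    -∫ x, f x ∂μ ≤
      2 * M * ((μ (Dp ∩ {x | f x ≤ 0})).toReal + (μ (Dpᶜ ∩ {x | 0 < f x})).toReal)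
        + ∫ x in Dp, f x ∂μ - ∫ x in Dpᶜ, f x ∂μ := by
  have hfi : Integrable f μ := .of_bound hf.aestronglyMeasurable M (.of_forall hbound)
  refine (neg_integral_le_risk_bound_general hDp.nullMeasurableSet hfi (measure_ne_top _ _)
    (.of_forall fun x ↦ neg_le_of_abs_le (hbound x))).trans ?_
  gcongr
  exact le_add_of_nonneg_right ENNReal.toReal_nonneg
end

section
/- Let X be a metric space with its Borel σ-algebra and μ a probability measure on X such that f(x) ≤ 0 for μ-almost every x (μ is the distribution over the negatively predicted region H_f^- = {f ≤ 0}). Let f : X → ℝ be measurable with |f(x)| ≤ c^max for all x, let α > 0, and assume dist(x, {y : f(y) > 0}) ≤ α · max(0, −f(x)) for μ-almost every x (Assumption 1 with γ = 1). Let D⁺ ⊆ X be measurable with 0 < μ(D⁺) < 1, write π = μ(D⁺), c_{D⁺} = (∫_{D⁺} f dμ)/μ(D⁺), c_{D⁻} = (∫_{(D⁺)ᶜ} f dμ)/μ((D⁺)ᶜ), and R = π · μ({f ≤ 0} | D⁺) + (1 − π) · μ({f > 0} | (D⁺)ᶜ) (conditional probabilities under μ). Then the expected cost of counterfactual recommendations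 satisfies ∫ dist(x, {f > 0}) dμ(x) ≤ α · ( π · c_{D⁺} − (1 − π) · c_{D⁻} + 2 · c^max · R ). -/
open MeasureTheory Metric

/-!
Since `f⁻ ≤ |f|`, the expected cost is at most `α * ∫ |f|`. The identities
`|f| = f + 2 f⁻` on `D⁺` and `|f| = -f + 2 f⁺` on the complement turn `∫ |f|` into the difference of
the two score integrals plus an excess supported on the misclassified points, where `f⁻` and `f⁺`
are at most `c^max`. The mass of these points is `R`.
-/

section

variable {X : Type*} [MeasurableSpace X] {μ : Measure X} {f : X → ℝ}

theorem integral_le_mul_integral_abs_of_le_mul_max_zero_neg {c : X → ℝ} {α : ℝ}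
    (hf : Integrable f μ) (hα : 0 ≤ α) (hc : 0 ≤ᵐ[μ] c)
    (hcf : ∀ᵐ x ∂μ, c x ≤ α * max 0 (-f x)) :
    ∫ x, c x ∂μ ≤ α * ∫ x, |f x| ∂μ := by
  rw [← integral_const_mul]
  refine integral_mono_of_nonneg hc (hf.abs.const_mul α) ?_
  filter_upwards [hcf] with x hx
  exact hx.trans (mul_le_mul_of_nonneg_left (max_le (abs_nonneg _) (neg_le_abs _)) hα)

variable [IsFiniteMeasure μ] {C : ℝ}

theorem integral_abs_le_integral_add_mul_measureReal_neg (hf : Integrable f μ)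
    (hC : ∀ᵐ x ∂μ, |f x| ≤ C) :
    ∫ x, |f x| ∂μ ≤ ∫ x, f x ∂μ + 2 * C * μ.real {x | f x < 0} := by
  have hneg : NullMeasurableSet {x | f x < 0} μ :=
    nullMeasurableSet_lt hf.aemeasurable aemeasurable_const
  have hexcess : Integrable ({x | f x < 0}.indicator fun _ ↦ 2 * C) μ :=
    (integrable_const _).indicator₀ hneg
  calc ∫ x, |f x| ∂μ
      ≤ ∫ x, (f x + {x | f x < 0}.indicator (fun _ ↦ 2 * C) x) ∂μ := by
        refine integral_mono_ae hf.abs (hf.add hexcess) ?_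
        filter_upwards [hC] with x hx
        rcases lt_or_ge (f x) 0 with hlt | hge
        · have hmem : x ∈ {x | f x < 0} := hlt
          rw [Set.indicator_of_mem hmem]
          linarith [abs_of_neg hlt]
        · have hmem : x ∉ {x | f x < 0} := not_lt.2 hge
          rw [Set.indicator_of_notMem hmem, add_zero, abs_of_nonneg hge]
    _ = ∫ x, f x ∂μ + 2 * C * μ.real {x | f x < 0} := by
        rw [integral_add hf hexcess, integral_indicator₀ hneg, setIntegral_const, smul_eq_mul,
          mul_comm (μ.real _)]

theorem integral_abs_le_setIntegral_sub_setIntegral_compl_add (hf : Integrable f μ)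
    (hC : ∀ᵐ x ∂μ, |f x| ≤ C) {s : Set X} (hs : NullMeasurableSet s μ) :
    ∫ x, |f x| ∂μ ≤ ∫ x in s, f x ∂μ - ∫ x in sᶜ, f x ∂μ
      + 2 * C * (μ.real ({x | f x < 0} ∩ s) + μ.real ({x | 0 < f x} ∩ sᶜ)) := by
  have h_on := integral_abs_le_integral_add_mul_measureReal_neg hf.integrableOn
    (ae_restrict_of_ae (s := s) hC)
  have h_off := integral_abs_le_integral_add_mul_measureReal_neg (f := fun x ↦ -f x)
    hf.neg.integrableOn (ae_restrict_of_ae (s := sᶜ) (by simpa only [abs_neg] using hC))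
  simp only [abs_neg, neg_lt_zero, integral_neg] at h_off
  rw [measureReal_def, Measure.restrict_apply₀' hs, ← measureReal_def] at h_on
  rw [measureReal_def, Measure.restrict_apply₀' hs.compl, ← measureReal_def] at h_off
  rw [← integral_add_compl₀ hs hf.abs]
  linarith

end

theorem expected_cost_bound_single_classifier_general {X : Type*} [PseudoMetricSpace X]
    [MeasurableSpace X] (μ : Measure X) [IsProbabilityMeasure μ]
    (f : X → ℝ) (hf : AEMeasurable f μ) (cmax : ℝ) (hbound : ∀ᵐ x ∂μ, |f x| ≤ cmax)
    (α : ℝ) (hα : 0 ≤ α)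
    (hdist : ∀ᵐ x ∂μ, infDist x {y | 0 < f y} ≤ α * max 0 (-f x))
    (Dp : Set X) (hDpm : NullMeasurableSet Dp μ) (hDp0 : 0 < μ Dp) (hDp1 : μ Dp < 1)
    (π cDp cDm R : ℝ)
    (hπ : π = μ.real Dp)
    (hcDp : cDp = (∫ x in Dp, f x ∂μ) / μ.real Dp)
    (hcDm : cDm = (∫ x in Dpᶜ, f x ∂μ) / μ.real Dpᶜ)
    (hR : R = π * (μ.real ({x | f x ≤ 0} ∩ Dp) / μ.real Dp)
      + (1 - π) * (μ.real ({x | 0 < f x} ∩ Dpᶜ) / μ.real Dpᶜ)) :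
    ∫ x, infDist x {y | 0 < f y} ∂μ ≤
      α * (π * cDp - (1 - π) * cDm + 2 * cmax * R) := by
  have hint : Integrable f μ := .of_bound hf.aestronglyMeasurable cmax hbound
  have hcmax : 0 ≤ cmax := hbound.exists.elim fun x hx ↦ (abs_nonneg (f x)).trans hx
  have hcompl : 1 - π = μ.real Dpᶜ := by rw [hπ, probReal_compl_eq_one_sub₀ hDpm]
  have hDp : μ.real Dp ≠ 0 := by rw [measureReal_ne_zero_iff]; exact hDp0.ne'
  have hDm : μ.real Dpᶜ ≠ 0 := by
    rw [measureReal_ne_zero_iff, Ne, prob_compl_eq_zero_iff₀ hDpm]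
    exact hDp1.ne
  have hscoreDp : π * cDp = ∫ x in Dp, f x ∂μ := by rw [hπ, hcDp, mul_div_cancel₀ _ hDp]
  have hscoreDm : (1 - π) * cDm = ∫ x in Dpᶜ, f x ∂μ := by
    rw [hcompl, hcDm, mul_div_cancel₀ _ hDm]
  have hrisk : R = μ.real ({x | f x ≤ 0} ∩ Dp) + μ.real ({x | 0 < f x} ∩ Dpᶜ) := by
    rw [hR, hcompl, hπ, mul_div_cancel₀ _ hDp, mul_div_cancel₀ _ hDm]
  have hmass : μ.real ({x | f x < 0} ∩ Dp) ≤ μ.real ({x | f x ≤ 0} ∩ Dp) :=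
    measureReal_mono (Set.inter_subset_inter_left _ (Set.ofPred_subset_ofPred.2 fun _ ↦ le_of_lt))
  rw [hscoreDp, hscoreDm, hrisk]
  calc ∫ x, infDist x {y | 0 < f y} ∂μ
      ≤ α * ∫ x, |f x| ∂μ :=
        integral_le_mul_integral_abs_of_le_mul_max_zero_neg hint hα
          (.of_forall fun _ ↦ infDist_nonneg) hdist
    _ ≤ α * (∫ x in Dp, f x ∂μ - ∫ x in Dpᶜ, f x ∂μ
          + 2 * cmax * (μ.real ({x | f x < 0} ∩ Dp) + μ.real ({x | 0 < f x} ∩ Dpᶜ))) := by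
        gcongr
        exact integral_abs_le_setIntegral_sub_setIntegral_compl_add hint hbound hDpm
    _ ≤ _ := by gcongr

/-- Lemma 5 (Ustun et al., Theorem 3; the `γ = 1` expected-cost bound): if `μ` is supported on
`H_f^- = {f ≤ 0}`, `|f| ≤ c^max`, and `dist(x, {f > 0}) ≤ α·max 0 (-f x)` a.e., then
`∫ dist(x, {f > 0}) dμ ≤ α·(π·c_{D⁺} - (1 - π)·c_{D⁻} + 2·c^max·R)`. -/
theorem expected_cost_bound_single_classifier {X : Type*} [MetricSpace X] [MeasurableSpace X]
    [BorelSpace X] (μ : Measure X) [IsProbabilityMeasure μ]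
    (f : X → ℝ) (hf : Measurable f) (cmax : ℝ) (hbound : ∀ x, |f x| ≤ cmax)
    (α : ℝ) (hα : 0 < α)
    (hneg : ∀ᵐ x ∂μ, f x ≤ 0)
    (hdist : ∀ᵐ x ∂μ, infDist x {y | 0 < f y} ≤ α * max 0 (-f x))
    (Dp : Set X) (hDpm : MeasurableSet Dp) (hDp0 : 0 < μ Dp) (hDp1 : μ Dp < 1)
    (π cDp cDm R : ℝ)
    (hπ : π = (μ Dp).toReal)
    (hcDp : cDp = (∫ x in Dp, f x ∂μ) / (μ Dp).toReal)
    (hcDm : cDm = (∫ x in Dpᶜ, f x ∂μ) / (μ Dpᶜ).toReal)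
    (hR : R = π * ((μ ({x | f x ≤ 0} ∩ Dp)).toReal / (μ Dp).toReal)
      + (1 - π) * ((μ ({x | 0 < f x} ∩ Dpᶜ)).toReal / (μ Dpᶜ).toReal)) :
    ∫ x, infDist x {y | 0 < f y} ∂μ ≤
      α * (π * cDp - (1 - π) * cDm + 2 * cmax * R) := by
  exact expected_cost_bound_single_classifier_general μ f hf.aemeasurable cmax (.of_forall hbound)
    α hα.le hdist Dp hDpm.nullMeasurableSet hDp0 hDp1 π cDp cDm R hπ hcDp hcDm hR
end

section
/- Let X be a metric space with its Borel σ-algebra and μ a probability measure on X such that min(f(x), g(x)) ≤ 0 for μ-almost every x (μ is the distribution over H_f^- ∪ H_g^-). Let f, g : X → ℝ be measurable with |f(x)| ≤ c^max_f and |g(x)| ≤ c^max_g for all x, let D⁺ ⊆ X be measurable, and assume the sets {f ≤ 0}, {g ≤ 0}, {f ≤ 0} ∩ D⁺, {f ≤ 0} ∩ (D⁺)ᶜ, {g ≤ 0} ∩ D⁺, {g ≤ 0} ∩ (D⁺)ᶜ all have positive μ-measure. Let α > 0, 0 < γ ≤ 1, and assume Assumption 1: dist(x, {f > 0} ∩ {g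 > 0}) ≤ α · (max(0, max(−f(x), −g(x))))^γ for all x. Define π_f = μ(D⁺ | {f ≤ 0}), π_g = μ(D⁺ | {g ≤ 0}); c_{D⁺}(f) = (∫_{{f ≤ 0} ∩ D⁺} f dμ)/μ({f ≤ 0} ∩ D⁺) and c_{D⁻}(f) = (∫_{{f ≤ 0} ∩ (D⁺)ᶜ} f dμ)/μ({f ≤ 0} ∩ (D⁺)ᶜ), with c_{D⁺}(g), c_{D⁻}(g) defined analogously; R_f = π_f · μ({f ≤ 0} | {f ≤ 0} ∩ D⁺) + (1 − π_f) · μ({f > 0} | {f ≤ 0} ∩ (D⁺)ᶜ), with R_g analogous; and Δ(f, g) = ∫ |f(x) − g(x)| dμ(x). Then the expected cost of counterfactual explanations under classifier multiplicity satisfies ∫ dist(x, {f > 0} ∩ {g > 0}) dμ(x) ≤ α · 8^{1−γ} · [ 2·R_f·c^max_f + 2·R_g·c^max_g + π_f·c_{D⁺}(f) + π_g·c_{D⁺}(g) − (1 − π_f)·c_{D⁻}(f) − (1 − π_g)·c_{D⁻}(g) + Δ(f, g) ]^γ. -/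
open MeasureTheory Metric

/-! Both classifiers' negative parts control the cost: pointwise
`max 0 (max (-f) (-g)) ≤ f⁻ + g⁻`, and Jensen's inequality for the concave power `t ↦ t ^ γ` moves
the integral inside the power. It remains to bound `∫ f⁻`. Writing `N = {f ≤ 0}`, the risk on `N`
is just the false-omission rate, so that the contribution of `f` to the bracket is
`(2 c μ(N ∩ D) + ∫_{N ∩ D} f - ∫_{N ∩ Dᶜ} f) / μ(N)`. Since `-c ≤ f`, replacing
`2 c μ(N ∩ D)` by `-2 ∫_{N ∩ D} f` gives the lower bound `(-∫_N f) / μ(N) ≥ ∫ f⁻`. The factor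
`8 ^ (1 - γ)` and the discrepancy `Δ` only enlarge the bound obtained in this way. -/

section Jensen

variable {Ω : Type*} [MeasurableSpace Ω] {μ : Measure Ω} {h : Ω → ℝ} {γ : ℝ}

lemma integrable_rpow_of_le_one_s7 [IsFiniteMeasure μ] (hh : Integrable h μ) (hh0 : 0 ≤ᵐ[μ] h)
    (hγ0 : 0 ≤ γ) (hγ1 : γ ≤ 1) : Integrable (fun x => h x ^ γ) μ := by
  have hnorm : Integrable (fun x => ‖h x‖ ^ γ) μ :=
    integrable_norm_rpow_of_le hh.aestronglyMeasurable hγ0 zero_le_one hγ1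
      (by simpa only [Real.rpow_one] using hh.norm)
  refine hnorm.congr ?_
  filter_upwards [hh0] with x hx
  rw [Real.norm_of_nonneg hx]

lemma integral_rpow_le_rpow_integral [IsProbabilityMeasure μ] (hh : Integrable h μ)
    (hh0 : 0 ≤ᵐ[μ] h) (hγ0 : 0 ≤ γ) (hγ1 : γ ≤ 1) :
    ∫ x, h x ^ γ ∂μ ≤ (∫ x, h x ∂μ) ^ γ :=
  (Real.concaveOn_rpow hγ0 hγ1).le_map_integral (Real.continuous_rpow_const hγ0).continuousOn
    isClosed_Ici hh0 hh (integrable_rpow_of_le_one_s7 hh hh0 hγ0 hγ1)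

lemma integral_le_mul_rpow_integral [IsProbabilityMeasure μ] {cost : Ω → ℝ} {α : ℝ}
    (hcost : AEStronglyMeasurable cost μ) (hcost0 : 0 ≤ᵐ[μ] cost) (hh : Integrable h μ)
    (hh0 : 0 ≤ᵐ[μ] h) (hα : 0 ≤ α) (hγ0 : 0 ≤ γ) (hγ1 : γ ≤ 1)
    (hle : ∀ᵐ x ∂μ, cost x ≤ α * h x ^ γ) :
    ∫ x, cost x ∂μ ≤ α * (∫ x, h x ∂μ) ^ γ := by
  have hpow : Integrable (fun x => α * h x ^ γ) μ :=
    (integrable_rpow_of_le_one_s7 hh hh0 hγ0 hγ1).const_mul α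
  have hcost_int : Integrable cost μ := by
    refine hpow.mono' hcost ?_
    filter_upwards [hcost0, hle] with x hx0 hx
    rwa [Real.norm_of_nonneg hx0]
  calc ∫ x, cost x ∂μ ≤ ∫ x, α * h x ^ γ ∂μ := integral_mono_ae hcost_int hpow hle
    _ = α * ∫ x, h x ^ γ ∂μ := integral_const_mul _ _
    _ ≤ α * (∫ x, h x ∂μ) ^ γ := by
      gcongr
      exact integral_rpow_le_rpow_integral hh hh0 hγ0 hγ1

end Jensen

lemma mul_rpow_le_mul_rpow_mul_rpow {α k s t γ : ℝ} (hα : 0 ≤ α) (hk : 1 ≤ k) (hs : 0 ≤ s)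
    (hst : s ≤ t) (hγ0 : 0 ≤ γ) (hγ1 : γ ≤ 1) :
    α * s ^ γ ≤ α * k ^ (1 - γ) * t ^ γ := by
  have hfactor : 1 ≤ k ^ (1 - γ) := Real.one_le_rpow hk (sub_nonneg.2 hγ1)
  gcongr
  exact le_mul_of_one_le_right hα hfactor

section NegPart

variable {Ω : Type*} [MeasurableSpace Ω] {μ : Measure Ω} {f : Ω → ℝ} {c : ℝ}

lemma integral_negPart_eq_neg_setIntegral (hf : AEMeasurable f μ) :
    ∫ x, (f x)⁻ ∂μ = -∫ x in {x | f x ≤ 0}, f x ∂μ := by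
  have hN : NullMeasurableSet {x | f x ≤ 0} μ := hf.nullMeasurable measurableSet_Iic
  rw [← integral_neg, ← integral_indicator₀ hN]
  congr 1 with x
  by_cases hx : x ∈ {x | f x ≤ 0}
  · rw [Set.indicator_of_mem hx, negPart_eq_neg.2 hx]
  · rw [Set.indicator_of_notMem hx, negPart_eq_zero.2 (not_le.1 hx).le]

lemma integrable_negPart_of_le [IsFiniteMeasure μ] (hf : AEMeasurable f μ)
    (hc : ∀ᵐ x ∂μ, -c ≤ f x) : Integrable (fun x => (f x)⁻) μ := by
  refine .of_bound (hf.neg.sup aemeasurable_const).aestronglyMeasurable (c ⊔ 0) ?_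
  filter_upwards [hc] with x hx
  rw [Real.norm_of_nonneg (negPart_nonneg _)]
  exact sup_le_sup_right (neg_le.1 hx) 0

lemma integrableOn_nonpos_of_le [IsFiniteMeasure μ] (hf : AEMeasurable f μ)
    (hc : ∀ᵐ x ∂μ, -c ≤ f x) : IntegrableOn f {x | f x ≤ 0} μ := by
  have hN : NullMeasurableSet {x | f x ≤ 0} μ := hf.nullMeasurable measurableSet_Iic
  refine Measure.integrableOn_of_bounded (measure_ne_top _ _) hf.aestronglyMeasurable (M := c) ?_
  filter_upwards [ae_restrict_of_ae hc, ae_restrict_mem₀ hN] with x hx hxN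
  rw [Real.norm_of_nonpos hxN]
  exact neg_le.1 hx

lemma max_zero_max_neg_le_negPart_add_negPart (a b : ℝ) :
    max 0 (max (-a) (-b)) ≤ a⁻ + b⁻ := by
  refine max_le (by positivity) (max_le ?_ ?_)
  · exact (neg_le_negPart a).trans (le_add_of_nonneg_right (negPart_nonneg b))
  · exact (neg_le_negPart b).trans (le_add_of_nonneg_left (negPart_nonneg a))

end NegPart

section ClassifierCostBound

variable {Ω : Type*} [MeasurableSpace Ω]

/-- The false-omission rate `π_f = μ(D | f ≤ 0)` of the classifier `f`, where `D` is the set of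
individuals with true label `+1`. -/
noncomputable def falseOmissionRate (μ : Measure Ω) (f : Ω → ℝ) (D : Set Ω) : ℝ :=
  μ.real (D ∩ {x | f x ≤ 0}) / μ.real {x | f x ≤ 0}

/-- The risk `R_f` of the classifier `f` over its negatively predicted individuals, as a mixture of
the error rates on the false negatives and on the true negatives. -/
noncomputable def negativeRisk (μ : Measure Ω) (f : Ω → ℝ) (D : Set Ω) : ℝ :=
  falseOmissionRate μ f D *
      (μ.real ({x | f x ≤ 0} ∩ ({x | f x ≤ 0} ∩ D)) / μ.real ({x | f x ≤ 0} ∩ D))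
    + (1 - falseOmissionRate μ f D) *
      (μ.real ({x | 0 < f x} ∩ ({x | f x ≤ 0} ∩ Dᶜ)) / μ.real ({x | f x ≤ 0} ∩ Dᶜ))

/-- The contribution `2 R_f c + π_f c_{D⁺}(f) - (1 - π_f) c_{D⁻}(f)` of one classifier to the bound
on the cost of counterfactual multiplicity. The expected costs `c_{D⁺}(f)` and `c_{D⁻}(f)` are the
averages of `f` over its false negatives and over its true negatives. -/
noncomputable def classifierCostBound (μ : Measure Ω) (f : Ω → ℝ) (D : Set Ω) (c : ℝ) : ℝ :=
  2 * negativeRisk μ f D * c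
    + falseOmissionRate μ f D * (⨍ x in {x | f x ≤ 0} ∩ D, f x ∂μ)
    - (1 - falseOmissionRate μ f D) * (⨍ x in {x | f x ≤ 0} ∩ Dᶜ, f x ∂μ)

variable {μ : Measure Ω} {f g : Ω → ℝ} {D : Set Ω} {c : ℝ}

lemma setIntegral_div_toReal_measure (s : Set Ω) :
    (∫ x in s, f x ∂μ) / (μ s).toReal = ⨍ x in s, f x ∂μ := by
  rw [setAverage_eq, smul_eq_mul, inv_mul_eq_div, measureReal_def]

lemma falseOmissionRate_eq_inter_div :
    falseOmissionRate μ f D = μ.real ({x | f x ≤ 0} ∩ D) / μ.real {x | f x ≤ 0} := by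
  rw [falseOmissionRate, Set.inter_comm]

lemma one_sub_falseOmissionRate [IsFiniteMeasure μ] (hD : NullMeasurableSet D μ)
    (hN : μ {x | f x ≤ 0} ≠ 0) :
    1 - falseOmissionRate μ f D =
      μ.real ({x | f x ≤ 0} ∩ Dᶜ) / μ.real {x | f x ≤ 0} := by
  have hsplit := measureReal_inter_add_sdiff₀ (μ := μ) (s := {x | f x ≤ 0}) hD
  have hN' : μ.real {x | f x ≤ 0} ≠ 0 := (measureReal_ne_zero_iff).2 hN
  rw [falseOmissionRate_eq_inter_div, one_sub_div hN', ← Set.sdiff_eq, ← hsplit,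
    add_sub_cancel_left]

-- The classifier errs on all of its false negatives and on none of its true negatives.
lemma negativeRisk_eq_falseOmissionRate : negativeRisk μ f D = falseOmissionRate μ f D := by
  have hFN : {x | f x ≤ 0} ∩ ({x | f x ≤ 0} ∩ D) = {x | f x ≤ 0} ∩ D :=
    Set.inter_eq_right.2 Set.inter_subset_left
  have hTN : {x | 0 < f x} ∩ ({x | f x ≤ 0} ∩ Dᶜ) = ∅ :=
    Set.eq_empty_of_forall_notMem fun x hx => not_le.2 (Set.mem_ofPred.1 hx.1) hx.2.1
  rw [negativeRisk, hFN, hTN, measureReal_empty, zero_div, mul_zero, add_zero,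
    falseOmissionRate_eq_inter_div, div_mul_div_comm, mul_comm (μ.real {x | f x ≤ 0}),
    ← div_div, mul_self_div_self]

lemma classifierCostBound_eq_div [IsFiniteMeasure μ] (hD : NullMeasurableSet D μ)
    (hN : μ {x | f x ≤ 0} ≠ 0) :
    classifierCostBound μ f D c =
      (2 * (c * μ.real ({x | f x ≤ 0} ∩ D)) + ∫ x in {x | f x ≤ 0} ∩ D, f x ∂μ
        - ∫ x in {x | f x ≤ 0} ∩ Dᶜ, f x ∂μ) / μ.real {x | f x ≤ 0} := by
  rw [← measure_smul_setAverage f (measure_ne_top μ ({x | f x ≤ 0} ∩ D)),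
    ← measure_smul_setAverage f (measure_ne_top μ ({x | f x ≤ 0} ∩ Dᶜ)),
    classifierCostBound, negativeRisk_eq_falseOmissionRate, one_sub_falseOmissionRate hD hN,
    falseOmissionRate_eq_inter_div, smul_eq_mul, smul_eq_mul]
  ring

lemma integral_negPart_le_classifierCostBound [IsProbabilityMeasure μ] (hf : AEMeasurable f μ)
    (hc : ∀ᵐ x ∂μ, -c ≤ f x) (hD : NullMeasurableSet D μ) (hN : μ {x | f x ≤ 0} ≠ 0) :
    ∫ x, (f x)⁻ ∂μ ≤ classifierCostBound μ f D c := by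
  have hfN : IntegrableOn f {x | f x ≤ 0} μ := integrableOn_nonpos_of_le hf hc
  have hsplit := integral_inter_add_sdiff₀ hD hfN
  rw [Set.sdiff_eq] at hsplit
  have hFN : μ.real ({x | f x ≤ 0} ∩ D) * -c ≤ ∫ x in {x | f x ≤ 0} ∩ D, f x ∂μ := by
    rw [← smul_eq_mul, ← setIntegral_const]
    exact setIntegral_mono_ae integrableOn_const (hfN.mono_set Set.inter_subset_left) hc
  have hneg : 0 ≤ ∫ x, (f x)⁻ ∂μ := integral_nonneg fun x => negPart_nonneg (f x)
  have hN_pos : 0 < μ.real {x | f x ≤ 0} :=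
    measureReal_nonneg.lt_of_ne' ((measureReal_ne_zero_iff).2 hN)
  rw [classifierCostBound_eq_div hD hN, le_div_iff₀ hN_pos]
  calc (∫ x, (f x)⁻ ∂μ) * μ.real {x | f x ≤ 0}
      ≤ ∫ x, (f x)⁻ ∂μ := mul_le_of_le_one_right hneg measureReal_le_one
    _ = -∫ x in {x | f x ≤ 0}, f x ∂μ := integral_negPart_eq_neg_setIntegral hf
    _ ≤ _ := by linarith

lemma classifierCostBound_nonneg [IsProbabilityMeasure μ] (hf : AEMeasurable f μ)
    (hc : ∀ᵐ x ∂μ, -c ≤ f x) (hD : NullMeasurableSet D μ) (hN : μ {x | f x ≤ 0} ≠ 0) :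
    0 ≤ classifierCostBound μ f D c :=
  (integral_nonneg fun x => negPart_nonneg (f x)).trans
    (integral_negPart_le_classifierCostBound hf hc hD hN)

theorem cost_of_counterfactual_multiplicity_general [IsProbabilityMeasure μ] {cf cg α γ : ℝ}
    (hf : AEMeasurable f μ) (hg : AEMeasurable g μ)
    (hcf : ∀ᵐ x ∂μ, -cf ≤ f x) (hcg : ∀ᵐ x ∂μ, -cg ≤ g x)
    (hD : NullMeasurableSet D μ) (hNf : μ {x | f x ≤ 0} ≠ 0) (hNg : μ {x | g x ≤ 0} ≠ 0)
    (hα : 0 ≤ α) (hγ0 : 0 ≤ γ) (hγ1 : γ ≤ 1) {cost : Ω → ℝ}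
    (hcost : AEStronglyMeasurable cost μ) (hcost0 : 0 ≤ᵐ[μ] cost)
    (hle : ∀ᵐ x ∂μ, cost x ≤ α * max 0 (max (-f x) (-g x)) ^ γ) :
    ∫ x, cost x ∂μ ≤
      α * (classifierCostBound μ f D cf + classifierCostBound μ g D cg) ^ γ := by
  have hf_int : Integrable (fun x => (f x)⁻) μ := integrable_negPart_of_le hf hcf
  have hg_int : Integrable (fun x => (g x)⁻) μ := integrable_negPart_of_le hg hcg
  have hsum0 : 0 ≤ᵐ[μ] fun x => (f x)⁻ + (g x)⁻ :=
    .of_forall fun x => add_nonneg (negPart_nonneg _) (negPart_nonneg _)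
  have hle_sum : ∀ᵐ x ∂μ, cost x ≤ α * ((f x)⁻ + (g x)⁻) ^ γ := by
    filter_upwards [hle] with x hx
    refine hx.trans ?_
    gcongr
    exact max_zero_max_neg_le_negPart_add_negPart (f x) (g x)
  calc ∫ x, cost x ∂μ ≤ α * (∫ x, ((f x)⁻ + (g x)⁻) ∂μ) ^ γ :=
        integral_le_mul_rpow_integral hcost hcost0 (hf_int.add hg_int) hsum0 hα hγ0 hγ1 hle_sum
    _ = α * (∫ x, (f x)⁻ ∂μ + ∫ x, (g x)⁻ ∂μ) ^ γ := by rw [integral_add hf_int hg_int]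
    _ ≤ α * (classifierCostBound μ f D cf + classifierCostBound μ g D cg) ^ γ := by
      gcongr
      · exact integral_negPart_le_classifierCostBound hf hcf hD hNf
      · exact integral_negPart_le_classifierCostBound hg hcg hD hNg

end ClassifierCostBound

/-- Proposition 2 (bounding costs of counterfactual multiplicity): under Assumption 1, the
expected cost of counterfactual explanations under classifier multiplicity is bounded by
`α·8^(1-γ)·[2·R_f·c^max_f + 2·R_g·c^max_g + π_f·c_{D⁺}(f) + π_g·c_{D⁺}(g)
  - (1-π_f)·c_{D⁻}(f) - (1-π_g)·c_{D⁻}(g) + Δ(f,g)]^γ`. -/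
theorem cost_of_counterfactual_multiplicity {X : Type*} [MetricSpace X] [MeasurableSpace X]
    [BorelSpace X] (μ : Measure X) [IsProbabilityMeasure μ]
    (f g : X → ℝ) (hf : Measurable f) (hg : Measurable g)
    (cmaxf cmaxg : ℝ) (hbf : ∀ x, |f x| ≤ cmaxf) (hbg : ∀ x, |g x| ≤ cmaxg)
    (Dp : Set X) (hDpm : MeasurableSet Dp)
    (hneg : ∀ᵐ x ∂μ, min (f x) (g x) ≤ 0)
    (h1 : 0 < μ {x | f x ≤ 0}) (h2 : 0 < μ {x | g x ≤ 0})
    (h3 : 0 < μ ({x | f x ≤ 0} ∩ Dp)) (h4 : 0 < μ ({x | f x ≤ 0} ∩ Dpᶜ))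
    (h5 : 0 < μ ({x | g x ≤ 0} ∩ Dp)) (h6 : 0 < μ ({x | g x ≤ 0} ∩ Dpᶜ))
    (α γ : ℝ) (hα : 0 < α) (hγ0 : 0 < γ) (hγ1 : γ ≤ 1)
    (hdist : ∀ x, infDist x ({y | 0 < f y} ∩ {y | 0 < g y}) ≤
      α * (max 0 (max (-f x) (-g x))) ^ γ)
    (πf πg cDpf cDmf cDpg cDmg Rf Rg Δ : ℝ)
    (hπf : πf = (μ (Dp ∩ {x | f x ≤ 0})).toReal / (μ {x | f x ≤ 0}).toReal)
    (hπg : πg = (μ (Dp ∩ {x | g x ≤ 0})).toReal / (μ {x | g x ≤ 0}).toReal)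
    (hcDpf : cDpf =
      (∫ x in {x | f x ≤ 0} ∩ Dp, f x ∂μ) / (μ ({x | f x ≤ 0} ∩ Dp)).toReal)
    (hcDmf : cDmf =
      (∫ x in {x | f x ≤ 0} ∩ Dpᶜ, f x ∂μ) / (μ ({x | f x ≤ 0} ∩ Dpᶜ)).toReal)
    (hcDpg : cDpg =
      (∫ x in {x | g x ≤ 0} ∩ Dp, g x ∂μ) / (μ ({x | g x ≤ 0} ∩ Dp)).toReal)
    (hcDmg : cDmg =
      (∫ x in {x | g x ≤ 0} ∩ Dpᶜ, g x ∂μ) / (μ ({x | g x ≤ 0} ∩ Dpᶜ)).toReal)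
    (hRf : Rf = πf *
        ((μ ({x | f x ≤ 0} ∩ ({x | f x ≤ 0} ∩ Dp))).toReal / (μ ({x | f x ≤ 0} ∩ Dp)).toReal)
      + (1 - πf) *
        ((μ ({x | 0 < f x} ∩ ({x | f x ≤ 0} ∩ Dpᶜ))).toReal / (μ ({x | f x ≤ 0} ∩ Dpᶜ)).toReal))
    (hRg : Rg = πg *
        ((μ ({x | g x ≤ 0} ∩ ({x | g x ≤ 0} ∩ Dp))).toReal / (μ ({x | g x ≤ 0} ∩ Dp)).toReal)
      + (1 - πg) *
        ((μ ({x | 0 < g x} ∩ ({x | g x ≤ 0} ∩ Dpᶜ))).toReal / (μ ({x | g x ≤ 0} ∩ Dpᶜ)).toReal))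
    (hΔ : Δ = ∫ x, |f x - g x| ∂μ) :
    ∫ x, infDist x ({y | 0 < f y} ∩ {y | 0 < g y}) ∂μ ≤
      α * 8 ^ (1 - γ) *
        (2 * Rf * cmaxf + 2 * Rg * cmaxg + πf * cDpf + πg * cDpg
          - (1 - πf) * cDmf - (1 - πg) * cDmg + Δ) ^ γ := by
  have hlf : ∀ᵐ x ∂μ, -cmaxf ≤ f x := .of_forall fun x => neg_le_of_abs_le (hbf x)
  have hlg : ∀ᵐ x ∂μ, -cmaxg ≤ g x := .of_forall fun x => neg_le_of_abs_le (hbg x)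
  have hDn : NullMeasurableSet Dp μ := hDpm.nullMeasurableSet
  have hΔ0 : 0 ≤ Δ := hΔ ▸ integral_nonneg fun x => abs_nonneg (f x - g x)
  have hBf : 2 * Rf * cmaxf + πf * cDpf - (1 - πf) * cDmf = classifierCostBound μ f Dp cmaxf := by
    rw [hRf, hcDpf, hcDmf, hπf, setIntegral_div_toReal_measure, setIntegral_div_toReal_measure]
    rfl
  have hBg : 2 * Rg * cmaxg + πg * cDpg - (1 - πg) * cDmg = classifierCostBound μ g Dp cmaxg := by
    rw [hRg, hcDpg, hcDmg, hπg, setIntegral_div_toReal_measure, setIntegral_div_toReal_measure]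
    rfl
  have hBf0 := classifierCostBound_nonneg hf.aemeasurable hlf hDn h1.ne'
  have hBg0 := classifierCostBound_nonneg hg.aemeasurable hlg hDn h2.ne'
  refine (cost_of_counterfactual_multiplicity_general hf.aemeasurable hg.aemeasurable hlf hlg hDn
    h1.ne' h2.ne' hα.le hγ0.le hγ1 measurable_infDist.aestronglyMeasurable
    (.of_forall fun x => infDist_nonneg) (.of_forall hdist)).trans ?_
  exact mul_rpow_le_mul_rpow_mul_rpow hα.le (by norm_num) (add_nonneg hBf0 hBg0) (by linarith)
    hγ0.le hγ1
end
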